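/- arXiv:1403.4137 — 10 statements merged into one kernel-verified Lean document; each statement's English description precedes it below -/
import Mathlib

section
/- Let p be a prime, m a natural number, and let q ≥ 1, k, t be natural numbers with 0 ≤ k < t < p^m. Then the level-m partial binomial ⦃p^m·q + k, t⦄ is congruent to 0 modulo p, i.e. the p-adic norm of the rational number ⦃p^m·q + k, t⦄ is at most 1/p. (Equivalently, since ⟨p^m·q + k, t⟩ = q in this range, the p-adic valuation of the binomial coefficient C(p^m·q + k, t) is at least padicValNat p q + 1.) -/
/-- `mAngle p m k k'` is the number `⟨k, k'⟩ = q!/(q'!·q''!)` where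
`q = ⌊k/p^m⌋`, `q' = ⌊k'/p^m⌋` and `q'' = ⌊(k-k')/p^m⌋`. -/
def mAngle (p m k k' : ℕ) : ℚ :=
  (Nat.factorial (k / p ^ m) : ℚ) /
    ((Nat.factorial (k' / p ^ m) : ℚ) * (Nat.factorial ((k - k') / p ^ m) : ℚ))

/-- `mPartialBinom p m k k'` is the level-`m` partial binomial
`⦃k, k'⦄ = C(k, k') / ⟨k, k'⟩`. -/
def mPartialBinom (p m k k' : ℕ) : ℚ :=
  (Nat.choose k k' : ℚ) / mAngle p m k k'

/-- `mGamma p m a b c` is the number `Γ(a,b,c) = ⦃a+b+c, a⦄·⦃b+c, b⦄·⟨a+b, a⟩·⟨a+c, a⟩`. -/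
def mGamma (p m a b c : ℕ) : ℚ :=
  mPartialBinom p m (a + b + c) a * mPartialBinom p m (b + c) b *
    mAngle p m (a + b) a * mAngle p m (a + c) a

/-- Kummer: there are carries in all positions `m, ..., m + v` where `p ^ v ∣ q`. -/
lemma aux_pow_dvd_choose (p m q k t v : ℕ) (hp : p.Prime) (hq : 1 ≤ q)
    (hkt : k < t) (ht : t < p ^ m) (hv : p ^ v ∣ q) :
    p ^ (v + 1) ∣ Nat.choose (p ^ m * q + k) t := by
  have hle : p ^ m ≤ p ^ m * q := Nat.le_mul_of_pos_right _ hq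
  have htn : t ≤ p ^ m * q + k := by omega
  have hm : 1 ≤ m := by
    rcases Nat.eq_zero_or_pos m with h | h
    · subst h
      simp at ht
      omega
    · exact h
  rw [hp.pow_dvd_iff_le_factorization (Nat.choose_pos htn).ne']
  rw [Nat.factorization_choose (b := Nat.log p (p ^ m * q + k) + m + v + 1) hp htn (by omega)]
  have hsub : Finset.Ico m (m + v + 1) ⊆
      {i ∈ Finset.Ico 1 (Nat.log p (p ^ m * q + k) + m + v + 1) |
        p ^ i ≤ t % p ^ i + (p ^ m * q + k - t) % p ^ i} := by
    intro i hi
    rw [Finset.mem_Ico] at hi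
    rw [Finset.mem_filter, Finset.mem_Ico]
    refine ⟨⟨by omega, by omega⟩, ?_⟩
    have hpi : p ^ m ≤ p ^ i := Nat.pow_le_pow_right hp.pos hi.1
    have hd : p ^ i ∣ p ^ m * q := by
      refine (pow_dvd_pow p (by omega : i ≤ m + v)).trans ?_
      rw [pow_add]
      exact Nat.mul_dvd_mul_left _ hv
    by_contra hlt
    push Not at hlt
    have h1 : (p ^ m * q + k) % p ^ i = k := by
      obtain ⟨c, hc⟩ := hd
      rw [hc, Nat.mul_add_mod, Nat.mod_eq_of_lt (by omega)]
    have h2 : (t + (p ^ m * q + k - t)) % p ^ i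
        = t % p ^ i + (p ^ m * q + k - t) % p ^ i := by
      rw [Nat.add_mod, Nat.mod_eq_of_lt hlt]
    rw [Nat.add_sub_cancel' htn, h1, Nat.mod_eq_of_lt (by omega : t < p ^ i)] at h2
    exact absurd (h2 ▸ Nat.le_add_right t _ : t ≤ k) (by omega)
  have := Finset.card_le_card hsub
  rw [Nat.card_Ico] at this
  omega

theorem partialBinom_zero_mod_p (p m q k t : ℕ) (hp : p.Prime) (hq : 1 ≤ q)
    (hkt : k < t) (ht : t < p ^ m) :
    padicNorm p (mPartialBinom p m (p ^ m * q + k) t) ≤ 1 / p := by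
  have : Fact p.Prime := ⟨hp⟩
  have hppos : 0 < p ^ m := pow_pos hp.pos m
  obtain ⟨v, u, hu, hqu⟩ := Nat.exists_eq_pow_mul_and_not_dvd (by omega : q ≠ 0) p hp.ne_one
  obtain ⟨c, hc⟩ := aux_pow_dvd_choose p m q k t v hp hq hkt ht ⟨u, hqu⟩
  have e1 : (p ^ m * q + k) / p ^ m = q := by
    rw [Nat.mul_add_div hppos, Nat.div_eq_of_lt (by omega), add_zero]
  have e2 : t / p ^ m = 0 := Nat.div_eq_of_lt ht
  have e3 : (p ^ m * q + k - t) / p ^ m = q - 1 := by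
    obtain ⟨r, rfl⟩ : ∃ r, q = r + 1 := ⟨q - 1, by omega⟩
    have : p ^ m * (r + 1) + k - t = p ^ m * r + (p ^ m + k - t) := by
      rw [Nat.mul_add_one]
      omega
    rw [this, Nat.mul_add_div hppos, Nat.div_eq_of_lt (by omega)]
    simp
  have hu0 : u ≠ 0 := by
    rintro rfl
    simp at hu
  have hp0 : (p : ℚ) ≠ 0 := by exact_mod_cast hp.ne_zero
  have hu0' : (u : ℚ) ≠ 0 := by exact_mod_cast hu0
  have hf : ((q - 1).factorial : ℚ) ≠ 0 := by exact_mod_cast (Nat.factorial_pos _).ne'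
  have hfq : (q.factorial : ℚ) = q * ((q - 1).factorial : ℚ) := by
    exact_mod_cast (Nat.mul_factorial_pred (by omega : q ≠ 0)).symm
  have hqQ : (q : ℚ) = p ^ v * u := by exact_mod_cast hqu
  have key : mPartialBinom p m (p ^ m * q + k) t = p * (c / u) := by
    unfold mPartialBinom mAngle
    rw [e1, e2, e3, hc, hfq, hqQ]
    push_cast [Nat.factorial_zero]
    field_simp
    ring
  have hnu : padicNorm p (u : ℚ) = 1 := (padicNorm.nat_eq_one_iff u).2 hu
  rw [key, padicNorm.mul, padicNorm.div, hnu, padicNorm.padicNorm_p_of_prime, div_one, one_div]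
  have hpp : (0 : ℚ) ≤ (p : ℚ)⁻¹ := by positivity
  exact mul_le_of_le_one_right hpp (padicNorm.of_nat c)
end

section
/- Let p be a prime, m a natural number, and let q ≥ 1 and k be natural numbers with 0 ≤ k < p^m. Then the level-m partial binomial ⦃p^m·q + k, p^m⦄ is congruent to 1 modulo p, i.e. the p-adic norm of the rational number C(p^m·q + k, p^m)/q − 1 is at most 1/p (note ⟨p^m·q + k, p^m⟩ = q in this range). -/
lemma aux_mul (p : ℕ) [Fact p.Prime] (x y : ℚ) (hx : padicNorm p (x - 1) ≤ 1 / p)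
    (hy : padicNorm p (y - 1) ≤ 1 / p) : padicNorm p (x * y - 1) ≤ 1 / p := by
  have h1 : (1 : ℚ) / p ≤ 1 := by
    have := (Fact.out : p.Prime).one_le
    rw [div_le_one (by positivity)]
    exact_mod_cast this
  have e : x * y - 1 = (x - 1) * (y - 1) + ((x - 1) + (y - 1)) := by ring
  rw [e]
  refine padicNorm.nonarchimedean.trans (max_le ?_ (padicNorm.nonarchimedean.trans (max_le hx hy)))
  rw [padicNorm.mul]
  calc _ ≤ (1 / p : ℚ) * 1 :=
        mul_le_mul hx (hy.trans h1) (padicNorm.nonneg _) (by positivity)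
    _ = _ := mul_one _

lemma aux_ratio (p m d : ℕ) [hp : Fact p.Prime] (hd : ¬ p ^ m ∣ d) :
    padicNorm p (((p ^ m : ℕ) : ℚ) / d) ≤ 1 / p := by
  have hd0 : d ≠ 0 := by rintro rfl; simp at hd
  obtain ⟨v, u, hu, rfl⟩ := Nat.exists_eq_pow_mul_and_not_dvd hd0 p hp.out.ne_one
  have hv : v < m := by
    by_contra h
    exact hd (dvd_mul_of_dvd_left (pow_dvd_pow p (not_lt.mp h)) u)
  obtain ⟨t, rfl⟩ : ∃ t, m = v + 1 + t := ⟨m - (v + 1), by omega⟩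
  have hp0 : (p : ℚ) ≠ 0 := by exact_mod_cast hp.out.ne_zero
  have hu0 : (u : ℚ) ≠ 0 := by
    rintro h
    have : u = 0 := by exact_mod_cast h
    exact hu (this ▸ dvd_zero p)
  have e : (((p ^ (v + 1 + t) : ℕ) : ℚ) / ((p ^ v * u : ℕ) : ℚ)) = p * ((p ^ t : ℕ) : ℚ) / u := by
    push_cast
    field_simp
    ring
  have hun : padicNorm p (u : ℚ) = 1 := padicNorm.nat_eq_one_iff u |>.2 hu
  rw [e, padicNorm.div, padicNorm.mul, hun, padicNorm.padicNorm_p_of_prime, div_one, one_div]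
  exact mul_le_of_le_one_right (by positivity) (padicNorm.of_nat _)

lemma aux_base (p b : ℕ) [hp : Fact p.Prime] : ∀ m : ℕ,
    (p ^ m * (b + 1) - 1).choose (p ^ m - 1) ≡ 1 [MOD p] := by
  intro m
  induction m with
  | zero => simp; rfl
  | succ m ih =>
    have hpp := hp.out.pos
    have key : ∀ n, 0 < n → (p * n - 1) % p = p - 1 ∧ (p * n - 1) / p = n - 1 := by
      intro n hn
      obtain ⟨n, rfl⟩ := Nat.exists_eq_add_of_lt hn
      have : p * (0 + n + 1) - 1 = (p - 1) + p * n := by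
        rw [Nat.mul_add]; simp; omega
      rw [this]
      constructor
      · rw [Nat.add_mul_mod_self_left, Nat.mod_eq_of_lt (by omega)]
      · rw [Nat.add_mul_div_left _ _ hpp, Nat.div_eq_of_lt (by omega)]; omega
    have h := Choose.choose_modEq_choose_mod_mul_choose_div_nat (p := p)
      (n := p ^ (m + 1) * (b + 1) - 1) (k := p ^ (m + 1) - 1)
    have e1 : p ^ (m + 1) * (b + 1) = p * (p ^ m * (b + 1)) := by ring
    have e2 : p ^ (m + 1) = p * p ^ m := by ring
    rw [e1, e2, (key _ (by positivity)).1, (key _ (by positivity)).2, (key _ (by positivity)).1,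
      (key _ (by positivity)).2, Nat.choose_self, one_mul] at h
    rw [e1, e2]
    exact h.trans ih

lemma aux_main (p m b : ℕ) [hp : Fact p.Prime] (k : ℕ) (hk : k < p ^ m) :
    padicNorm p (((p ^ m * (b + 1) + k).choose (p ^ m) : ℚ) / ((b + 1 : ℕ) : ℚ) - 1) ≤ 1 / p := by
  have hN : 0 < p ^ m := pow_pos hp.out.pos m
  induction k with
  | zero =>
    have h := aux_base p b m
    have e : (p ^ m * (b + 1)).choose (p ^ m)
        = (b + 1) * (p ^ m * (b + 1) - 1).choose (p ^ m - 1) := by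
      obtain ⟨N, hNe⟩ := Nat.exists_eq_add_of_lt hN
      have hM : 0 < p ^ m * (b + 1) := by positivity
      obtain ⟨M, hMe⟩ := Nat.exists_eq_add_of_lt hM
      have := Nat.add_one_mul_choose_eq M N
      have h1 : p ^ m * (b + 1) - 1 = M := by omega
      have h2 : p ^ m - 1 = N := by omega
      have h3 : p ^ m * (b + 1) = M + 1 := by omega
      have h4 : p ^ m = N + 1 := by omega
      rw [h1, h2]
      apply Nat.eq_of_mul_eq_mul_right hN
      rw [h3]
      conv_lhs => rw [h4]
      rw [← this, ← h3]
      ring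
    rw [add_zero, e]
    have hb : ((b + 1 : ℕ) : ℚ) ≠ 0 := by positivity
    rw [Nat.cast_mul, mul_div_cancel_left₀ _ hb]
    have h' := (Nat.modEq_iff_dvd.1 h.symm)
    have := (padicNorm.dvd_iff_norm_le (p := p) (n := 1)).1 (by simpa using h')
    simpa using this
  | succ k ih =>
    have ih := ih (by omega)
    have hd : ¬ p ^ m ∣ p ^ m * b + (k + 1) := by
      rw [Nat.dvd_add_right (dvd_mul_right _ _)]
      exact fun h => absurd (Nat.le_of_dvd (by omega) h) (by omega)
    have hr := aux_ratio p m _ hd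
    have hd0 : ((p ^ m * b + (k + 1) : ℕ) : ℚ) ≠ 0 := by positivity
    have := aux_mul p _ (1 + ((p ^ m : ℕ) : ℚ) / ((p ^ m * b + (k + 1) : ℕ) : ℚ)) ih
      (by simpa using hr)
    convert this using 3
    have hc := Nat.choose_mul_succ_eq (p ^ m * (b + 1) + k) (p ^ m)
    have e : p ^ m * (b + 1) + k + 1 - p ^ m = p ^ m * b + (k + 1) := by
      rw [Nat.mul_add, mul_one]; omega
    rw [e] at hc
    have hc' : (((p ^ m * (b + 1) + k).choose (p ^ m) : ℚ)) * ((p ^ m * (b + 1) + k + 1 : ℕ) : ℚ)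
      = ((p ^ m * (b + 1) + k + 1).choose (p ^ m) : ℚ) * ((p ^ m * b + (k + 1) : ℕ) : ℚ) := by
      exact_mod_cast hc
    have hb : ((b + 1 : ℕ) : ℚ) ≠ 0 := by positivity
    rw [← add_assoc, eq_div_of_mul_eq hd0 hc'.symm]
    field_simp
    push_cast
    ring

theorem partialBinom_one_mod_p_of_top (p m q k : ℕ) (hp : p.Prime) (hq : 1 ≤ q)
    (hk : k < p ^ m) :
    padicNorm p (mPartialBinom p m (p ^ m * q + k) (p ^ m) - 1) ≤ 1 / p := by
  have : Fact p.Prime := ⟨hp⟩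
  obtain ⟨b, rfl⟩ : ∃ b, q = b + 1 := ⟨q - 1, by omega⟩
  have hN : 0 < p ^ m := pow_pos hp.pos m
  have hA : mAngle p m (p ^ m * (b + 1) + k) (p ^ m) = ((b + 1 : ℕ) : ℚ) := by
    have e : p ^ m * (b + 1) + k - p ^ m = p ^ m * b + k := by
      rw [Nat.mul_add, mul_one]; omega
    have hf : (Nat.factorial b : ℚ) ≠ 0 := by positivity
    rw [mAngle, e, Nat.mul_add_div hN, Nat.mul_add_div hN, Nat.div_eq_of_lt hk, Nat.div_self hN,
      add_zero, add_zero, Nat.factorial_one, Nat.factorial_succ]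
    push_cast
    field_simp
  rw [mPartialBinom, hA]
  exact aux_main p m b k hk
end

section
/- Let p be a prime, m a natural number, and let q, t be natural numbers with 0 ≤ t ≤ p^m. Then the level-m partial binomial ⦃p^m·q + t, t⦄ is congruent to 1 modulo p, i.e. the p-adic norm of the rational number C(p^m·q + t, t)/⟨p^m·q + t, t⟩ − 1 is at most 1/p. -/
theorem choose_aux (p : ℕ) [Fact p.Prime] (q m : ℕ) : ∀ t : ℕ, t < p ^ m →
    (Nat.choose (p ^ m * q + t) t : ℤ) ≡ 1 [ZMOD p] := by
  have hp0 : 0 < p := (Fact.out : p.Prime).pos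
  induction m with
  | zero =>
    intro t ht
    have : t = 0 := by simpa using ht
    subst this
    simp
  | succ m ih =>
    intro t ht
    have e : p ^ (m + 1) * q + t = t + p * (p ^ m * q) := by ring
    have h1 : (p ^ (m + 1) * q + t) % p = t % p := by
      rw [e, Nat.add_mul_mod_self_left]
    have h2 : (p ^ (m + 1) * q + t) / p = p ^ m * q + t / p := by
      rw [e, Nat.add_mul_div_left _ _ hp0, add_comm]
    have h3 : t / p < p ^ m := by
      rw [Nat.div_lt_iff_lt_mul hp0]
      rwa [pow_succ] at ht
    have h := Choose.choose_modEq_choose_mod_mul_choose_div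
      (n := p ^ (m + 1) * q + t) (k := t) (p := p)
    rw [h1, h2, Nat.choose_self] at h
    refine h.trans ?_
    simpa using ih _ h3

theorem norm_aux (p : ℕ) [Fact p.Prime] (q m t : ℕ) (ht : t < p ^ m) :
    padicNorm p ((Nat.choose (p ^ m * q + t) t : ℚ) - 1) ≤ 1 / p := by
  have h := (choose_aux p q m t ht).symm.dvd
  have h' := (padicNorm.dvd_iff_norm_le (p := p) (n := 1)
    (z := (Nat.choose (p ^ m * q + t) t : ℤ) - 1)).1 (by simpa using h)
  simpa using h'

theorem partialBinom_one_mod_p (p m q t : ℕ) (hp : p.Prime) (ht : t ≤ p ^ m) :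
    padicNorm p (mPartialBinom p m (p ^ m * q + t) t - 1) ≤ 1 / p := by
  haveI := Fact.mk hp
  have hP : 0 < p ^ m := pow_pos hp.pos m
  have hq : (Nat.factorial q : ℚ) ≠ 0 := by exact_mod_cast Nat.factorial_ne_zero q
  rcases ht.lt_or_eq with h | h
  · have e : mPartialBinom p m (p ^ m * q + t) t = Nat.choose (p ^ m * q + t) t := by
      unfold mPartialBinom mAngle
      rw [Nat.add_sub_cancel, Nat.mul_add_div hP, Nat.div_eq_of_lt h,
        Nat.mul_div_cancel_left _ hP]
      simp [hq]
    rw [e]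
    exact norm_aux p q m t h
  · subst h
    have e : mPartialBinom p m (p ^ m * q + p ^ m) (p ^ m)
        = Nat.choose (p ^ m * q + (p ^ m - 1)) (p ^ m - 1) := by
      unfold mPartialBinom mAngle
      rw [Nat.add_sub_cancel, Nat.mul_add_div hP, Nat.div_self hP,
        Nat.mul_div_cancel_left _ hP, Nat.factorial_succ]
      obtain ⟨r, hr⟩ : ∃ r, p ^ m = r + 1 := ⟨p ^ m - 1, by omega⟩
      rw [hr]
      have h := Nat.add_one_mul_choose_eq ((r + 1) * q + r) r
      have h' : (((r : ℚ) + 1) * q + r + 1) * (Nat.choose ((r + 1) * q + r) r : ℚ)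
          = (Nat.choose ((r + 1) * q + (r + 1)) (r + 1) : ℚ) * (r + 1) := by
        exact_mod_cast h
      have hr0 : (r : ℚ) + 1 ≠ 0 := by positivity
      have hq0 : (q : ℚ) + 1 ≠ 0 := by positivity
      have h2 : (Nat.choose ((r + 1) * q + (r + 1)) (r + 1) : ℚ)
          = (q + 1) * (Nat.choose ((r + 1) * q + r) r : ℚ) := by
        apply mul_right_cancel₀ hr0
        rw [← h']
        ring
      rw [h2]
      simp only [Nat.add_sub_cancel]
      push_cast
      simp only [Nat.factorial_one, Nat.cast_one, one_mul]
      field_simp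
    rw [e]
    exact norm_aux p q m _ (by omega)
end

section
/- Let p be a prime and m a natural number, and let a, b, c be natural numbers with a + c ≤ p^m. Set N := a + b + c. Then the rational number Γ(a,b,c) satisfies the exact identity Γ(a,b,c) = ⦃N, c⦄ · C(N − c, a), where C denotes the usual binomial coefficient; explicitly, C(N,a)·C(b+c,b)·⟨a+b,a⟩·⟨a+c,a⟩ / (⟨N,a⟩·⟨b+c,b⟩) = C(N,c)·C(N−c,a)/⟨N,c⟩ in ℚ. -/
theorem factorial_div_eq_one_of_le (n d : ℕ) (hd : 0 < d) (h : n ≤ d) :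
    Nat.factorial (n / d) = 1 := by
  have h1 : n / d ≤ 1 := by
    calc n / d ≤ d / d := Nat.div_le_div_right h
      _ = 1 := Nat.div_self hd
  exact Nat.factorial_eq_one.mpr h1

theorem gamma_eq_partialBinom_mul_choose (p m a b c : ℕ) (hp : p.Prime)
    (hac : a + c ≤ p ^ m) :
    mGamma p m a b c =
      mPartialBinom p m (a + b + c) c * (Nat.choose (a + b + c - c) a : ℚ) := by
  have hd : 0 < p ^ m := pow_pos hp.pos m
  have ha := factorial_div_eq_one_of_le a _ hd (by omega)
  have hc := factorial_div_eq_one_of_le c _ hd (by omega)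
  have hs := factorial_div_eq_one_of_le (a + c) _ hd hac
  have e1 : a + b + c - a = b + c := by omega
  have e2 : b + c - b = c := by omega
  have e3 : a + b - a = b := by omega
  have e4 : a + c - a = c := by omega
  have e5 : a + b + c - c = a + b := by omega
  have c1 : ((a + b + c).choose a : ℚ) = (a + b + c).factorial / (a.factorial * (b + c).factorial) := by
    rw [Nat.cast_choose ℚ (by omega), e1]
  have c2 : ((b + c).choose b : ℚ) = (b + c).factorial / (b.factorial * c.factorial) := by
    rw [Nat.cast_choose ℚ (by omega), e2]
  have c3 : ((a + b + c).choose c : ℚ) = (a + b + c).factorial / (c.factorial * (a + b).factorial) := by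
    rw [Nat.cast_choose ℚ (by omega), e5]
  have c4 : ((a + b).choose a : ℚ) = (a + b).factorial / (a.factorial * b.factorial) := by
    rw [Nat.cast_choose ℚ (by omega), e3]
  have f : ∀ n : ℕ, (n.factorial : ℚ) ≠ 0 := fun n => by exact_mod_cast n.factorial_ne_zero
  unfold mGamma mPartialBinom mAngle
  rw [e1, e2, e3, e4, e5, c1, c2, c3, c4, ha, hc, hs]
  have f1 := f (a + b + c)
  have f2 := f (b + c)
  have f3 := f (a + b)
  have f4 := f a
  have f5 := f b
  have f6 := f c
  have g1 := f ((a + b + c) / p ^ m)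
  have g2 := f ((b + c) / p ^ m)
  have g3 := f ((a + b) / p ^ m)
  have g4 := f (b / p ^ m)
  generalize ((a + b + c) / p ^ m).factorial = x1 at *
  generalize ((b + c) / p ^ m).factorial = x2 at *
  generalize ((a + b) / p ^ m).factorial = x3 at *
  generalize (b / p ^ m).factorial = x4 at *
  push_cast
  field_simp
end

section
/- Let p be a prime, m, q, k natural numbers with 0 ≤ k < p^m, and let a, b, c be natural numbers with a + b + c = p^m·q + k and a + c ≤ p^m. If b < p^m·q, and (a,c) ≠ (p^m, 0), and (a,c) ≠ (0, p^m), then Γ(a,b,c) is congruent to 0 modulo p, i.e. the p-adic norm of the rational number Γ(a,b,c) is at most 1/p. -/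
lemma aux_choose_pow (p m v q i : ℕ) (hp : p.Prime) (hv : p ^ v ∣ q) (hi : 0 < i)
    (hiP : i < p ^ m) : p ^ (v + 1) ∣ Nat.choose (p ^ m * q) i := by
  obtain ⟨j, rfl⟩ : ∃ j, i = j + 1 := ⟨i - 1, by omega⟩
  rcases Nat.eq_zero_or_pos q with rfl | hq
  · simp
  have hP : 0 < p ^ m := pow_pos hp.pos m
  obtain ⟨N, hN⟩ : ∃ N, p ^ m * q = N + 1 :=
    ⟨p ^ m * q - 1, by have := Nat.mul_pos hP hq; omega⟩
  have h := Nat.add_one_mul_choose_eq N j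
  rw [← hN] at h
  have hd : p ^ (m + v) ∣ Nat.choose (p ^ m * q) (j + 1) * (j + 1) := by
    rw [← h, pow_add]
    exact Dvd.dvd.mul_right (mul_dvd_mul_left _ hv) _
  obtain ⟨e, u, hu, hju⟩ := Nat.exists_eq_pow_mul_and_not_dvd (n := j + 1) (by omega) p hp.ne_one
  have hem : e < m := by
    by_contra hcon
    have h1 : p ^ m ∣ j + 1 := hju ▸ Dvd.dvd.mul_right (pow_dvd_pow p (by omega)) u
    exact absurd (Nat.le_of_dvd (by omega) h1) (by omega)
  rw [hju] at hd
  rw [← hju] at hd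
  have h2 : p ^ e * p ^ (m + v - e) ∣ p ^ e * (Nat.choose (p ^ m * q) (j + 1) * u) := by
    rw [← pow_add, show e + (m + v - e) = m + v by omega]
    convert hd using 1
    conv_rhs => arg 2; rw [hju]
    ring
  have h3 := Nat.dvd_of_mul_dvd_mul_left (pow_pos hp.pos e) h2
  have h4 : p ^ (m + v - e) ∣ Nat.choose (p ^ m * q) (j + 1) :=
    Nat.Coprime.dvd_of_dvd_mul_right (Nat.Coprime.pow_left _ ((hp.coprime_iff_not_dvd).2 hu)) h3
  exact (pow_dvd_pow p (by omega)).trans h4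

lemma aux_choose (p m v q k c : ℕ) (hp : p.Prime) (hv : p ^ v ∣ q) (hk : k < c)
    (hc : c < p ^ m) : p ^ (v + 1) ∣ Nat.choose (p ^ m * q + k) c := by
  rw [Nat.add_choose_eq]
  apply Finset.dvd_sum
  rintro ⟨i, j⟩ hij
  rw [Finset.HasAntidiagonal.mem_antidiagonal] at hij
  dsimp only at hij ⊢
  by_cases hj : k < j
  · simp [Nat.choose_eq_zero_of_lt hj]
  · exact Dvd.dvd.mul_right (aux_choose_pow p m v q i hp hv (by omega) (by omega)) _

lemma aux_norm (p u t : ℕ) (x : ℚ) (hp : p.Prime) (hu : ¬ p ∣ u) (h : x * u = p * t) :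
    padicNorm p x ≤ 1 / p := by
  have := Fact.mk hp
  have h1 : padicNorm p (x * u) = padicNorm p (p * t) := by rw [h]
  rw [padicNorm.mul, padicNorm.mul, (padicNorm.nat_eq_one_iff (p := p) u).2 hu, mul_one,
    padicNorm.padicNorm_p_of_prime] at h1
  rw [h1, one_div]
  exact mul_le_of_le_one_right (by positivity) (padicNorm.of_nat t)

lemma aux_multi (a b c : ℕ) :
    (a + b + c).choose a * (b + c).choose b * (a.factorial * b.factorial * c.factorial)
      = (a + b + c).factorial := by
  rw [add_assoc, ← Nat.add_choose_mul_factorial_mul_factorial a (b + c),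
    ← Nat.add_choose_mul_factorial_mul_factorial b c,
    Nat.choose_symm_add (a := a) (b := b + c), Nat.choose_symm_add (a := b) (b := c)]
  ring

lemma aux_multi_perm (a b c : ℕ) :
    (a + b + c).choose a * (b + c).choose b = (a + b + c).choose c * (a + b).choose a := by
  have h1 := aux_multi a b c
  have h2 := aux_multi c a b
  rw [show c + a + b = a + b + c by ring] at h2
  have : 0 < a.factorial * b.factorial * c.factorial := by positivity
  apply Nat.eq_of_mul_eq_mul_right this
  rw [h1, ← h2]; ring

lemma aux_multi_perm' (a b c : ℕ) :
    (a + b + c).choose a * (b + c).choose b = (a + b + c).choose (a + c) * (a + c).choose a := by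
  rw [show (a + b + c).choose (a + c) = (a + b + c).choose b from
    Nat.choose_symm_of_eq_add (by ring)]
  have h1 := aux_multi a b c
  have h2 := aux_multi b a c
  rw [show b + a + c = a + b + c by ring] at h2
  have : 0 < a.factorial * b.factorial * c.factorial := by positivity
  apply Nat.eq_of_mul_eq_mul_right this
  rw [h1, ← h2]; ring

theorem gamma_zero_mod_p (p m q k a b c : ℕ) (hp : p.Prime) (hk : k < p ^ m)
    (habc : a + b + c = p ^ m * q + k) (hac : a + c ≤ p ^ m)
    (hb : b < p ^ m * q) (h1 : (a, c) ≠ (p ^ m, 0)) (h2 : (a, c) ≠ (0, p ^ m)) :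
    padicNorm p (mGamma p m a b c) ≤ 1 / p := by
  have hP : 0 < p ^ m := pow_pos hp.pos m
  have ha : a < p ^ m := by
    by_contra h
    exact h1 (Prod.ext (by simp; omega) (by simp; omega))
  have hc : c < p ^ m := by
    by_contra h
    exact h2 (Prod.ext (by simp; omega) (by simp; omega))
  have hq : 0 < q := by
    rcases Nat.eq_zero_or_pos q with rfl | h
    · simp at hb
    · exact h
  have hacf : ((a + c) / p ^ m).factorial = 1 := by
    have : (a + c) / p ^ m ≤ 1 := Nat.div_le_of_le_mul (by omega)
    interval_cases (a + c) / p ^ m <;> rfl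
  have hn : (a + b + c) / p ^ m = q := by
    rw [habc, Nat.mul_add_div hP, Nat.div_eq_of_lt hk, add_zero]
  have key : mGamma p m a b c * (q.factorial : ℚ) =
      (((a + b + c).choose a * (b + c).choose b : ℕ) : ℚ) * (((a + b) / p ^ m).factorial : ℚ) := by
    unfold mGamma mPartialBinom mAngle
    rw [hn, hacf, show a + b + c - a = b + c by omega, show b + c - b = c by omega,
      show a + b - a = b by omega, show a + c - a = c by omega,
      Nat.div_eq_of_lt ha, Nat.div_eq_of_lt hc]
    have e1 : (q.factorial : ℚ) ≠ 0 := by positivity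
    have e2 : (((b + c) / p ^ m).factorial : ℚ) ≠ 0 := by positivity
    have e3 : ((b / p ^ m).factorial : ℚ) ≠ 0 := by positivity
    push_cast
    simp only [Nat.factorial_zero, Nat.cast_one]
    field_simp
  by_cases hcase : p ^ m * q ≤ a + b
  · have hd : (a + b) / p ^ m = q := by
      apply le_antisymm
      · rw [← hn]; exact Nat.div_le_div_right (by omega)
      · rw [Nat.le_div_iff_mul_le hP, mul_comm]; exact hcase
    rw [hd] at key
    have key' := mul_right_cancel₀ (by positivity) key
    have hdvd : p ∣ (a + b + c).choose a * (b + c).choose b := by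
      rw [aux_multi_perm']
      rcases hac.lt_or_eq with hlt | heq
      · apply Dvd.dvd.mul_right
        rw [habc]
        simpa using aux_choose p m 0 q k (a + c) hp (by simp) (by omega) hlt
      · apply Dvd.dvd.mul_left
        rw [heq]
        exact hp.dvd_choose_pow (by omega) (by omega)
    obtain ⟨t, ht⟩ := hdvd
    refine aux_norm p 1 t _ hp hp.not_dvd_one ?_
    · rw [key', ht]; push_cast; ring
  · obtain ⟨r, rfl⟩ : ∃ r, q = r + 1 := ⟨q - 1, by omega⟩
    have hd : (a + b) / p ^ m = r := by
      apply le_antisymm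
      · rw [← Nat.lt_succ_iff, Nat.div_lt_iff_lt_mul hP, mul_comm]; simpa using hcase
      · rw [Nat.le_div_iff_mul_le hP]
        rw [mul_add, mul_one] at habc
        rw [mul_comm]; omega
    rw [hd, Nat.factorial_succ] at key
    have hr : (r.factorial : ℚ) ≠ 0 := by positivity
    have key' : mGamma p m a b c * ((r + 1 : ℕ) : ℚ) =
        (((a + b + c).choose a * (b + c).choose b : ℕ) : ℚ) := by
      apply mul_right_cancel₀ hr
      rw [← key]; push_cast; ring
    obtain ⟨v, u, hu, hvu⟩ :=
      Nat.exists_eq_pow_mul_and_not_dvd (n := r + 1) (by omega) p hp.ne_one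
    have hdvd := aux_choose p m v (r + 1) k c hp ⟨u, hvu⟩ (by omega) hc
    rw [← habc] at hdvd
    obtain ⟨t, ht⟩ := hdvd
    rw [aux_multi_perm, ht, hvu] at key'
    refine aux_norm p u (t * (a + b).choose a) _ hp hu ?_
    have hpv : ((p : ℚ) ^ v) ≠ 0 := pow_ne_zero _ (by exact_mod_cast hp.ne_zero)
    apply mul_left_cancel₀ hpv
    push_cast at key' ⊢
    rw [pow_succ] at key'
    linear_combination key'
end

section
/- Let p be a prime, m a natural number, and let q ≥ 1 and k be natural numbers with 0 ≤ k < p^m. Then Γ(p^m, p^m·(q−1) + k, 0) is congruent to q modulo p, i.e. the p-adic norm of the rational number Γ(p^m, p^m·(q−1) + k, 0) − q is at most 1/p. -/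
theorem choose_pow_modEq_aux (p : ℕ) (hp : p.Prime) (q : ℕ) : ∀ m k : ℕ, k < p ^ m →
    Nat.choose (p ^ m * q + k) (p ^ m) ≡ q [MOD p] := by
  haveI : Fact p.Prime := ⟨hp⟩
  intro m
  induction m with
  | zero =>
    intro k hk
    have : k = 0 := by simpa using hk
    subst this
    simp [Nat.ModEq]
  | succ m ih =>
    intro k hk
    have h := Choose.choose_modEq_choose_mod_mul_choose_div_nat
      (n := p ^ (m + 1) * q + k) (k := p ^ (m + 1)) (p := p)
    have h1 : p ^ (m + 1) % p = 0 := by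
      rw [pow_succ]; exact Nat.mul_mod_left _ _
    have h2 : p ^ (m + 1) / p = p ^ m := by
      rw [pow_succ]; exact Nat.mul_div_cancel _ hp.pos
    have h3 : (p ^ (m + 1) * q + k) / p = p ^ m * q + k / p := by
      have : p ^ (m + 1) * q + k = k + p * (p ^ m * q) := by ring
      rw [this, Nat.add_mul_div_left _ _ hp.pos, add_comm]
    rw [h1, h2, h3, Nat.choose_zero_right, one_mul] at h
    refine h.trans (ih _ ?_)
    rw [Nat.div_lt_iff_lt_mul hp.pos]
    rwa [pow_succ] at hk

theorem mAngle_ne_zero_aux (p m k k' : ℕ) : mAngle p m k k' ≠ 0 := by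
  unfold mAngle
  positivity

theorem gamma_eq_q_mod_p (p m q k : ℕ) (hp : p.Prime) (hq : 1 ≤ q) (hk : k < p ^ m) :
    padicNorm p (mGamma p m (p ^ m) (p ^ m * (q - 1) + k) 0 - (q : ℚ)) ≤ 1 / p := by
  haveI : Fact p.Prime := ⟨hp⟩
  have hself : ∀ n, mAngle p m n n = 1 := by
    intro n
    have : (Nat.factorial (n / p ^ m) : ℚ) ≠ 0 := by positivity
    simp [mAngle, this]
  have hG : mGamma p m (p ^ m) (p ^ m * (q - 1) + k) 0
      = ((Nat.choose (p ^ m * q + k) (p ^ m) : ℕ) : ℚ) := by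
    have e : p ^ m + (p ^ m * (q - 1) + k) = p ^ m * q + k := by
      obtain ⟨r, rfl⟩ := Nat.exists_eq_add_of_le hq
      rw [Nat.add_sub_cancel_left]; ring
    have := mAngle_ne_zero_aux p m (p ^ m * q + k) (p ^ m)
    unfold mGamma mPartialBinom
    simp only [add_zero, hself, e, Nat.choose_self]
    field_simp
    try simp
  rw [hG]
  have hc := (choose_pow_modEq_aux p hp q m k hk).symm
  have hd := (Nat.modEq_iff_dvd).1 hc
  have := (padicNorm.dvd_iff_norm_le (p := p) (n := 1)
    (z := ((Nat.choose (p ^ m * q + k) (p ^ m) : ℕ) : ℤ) - (q : ℤ))).1 (by simpa using hd)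
  simpa using this
end

section
/- Let p be a prime, m a natural number, and let q ≥ 1 and k be natural numbers with 0 ≤ k < p^m. Then Γ(0, p^m·(q−1) + k, p^m) is congruent to 1 modulo p, i.e. the p-adic norm of the rational number Γ(0, p^m·(q−1) + k, p^m) − 1 is at most 1/p. -/
lemma close_mul {p : ℕ} [Fact p.Prime] {x y : ℚ} (hx : padicNorm p (x - 1) ≤ 1 / p)
    (hy : padicNorm p (y - 1) ≤ 1 / p) : padicNorm p (x * y - 1) ≤ 1 / p := by
  have e : x * y - 1 = ((x - 1) * (y - 1) + (x - 1)) + (y - 1) := by ring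
  have h1 : (1 : ℚ) / p ≤ 1 := by
    have : (1 : ℚ) ≤ p := by exact_mod_cast (Fact.out : p.Prime).one_le
    rw [div_le_one (by linarith)]; exact this
  have h2 : padicNorm p ((x - 1) * (y - 1)) ≤ 1 / p := by
    rw [padicNorm.mul]
    calc _ ≤ padicNorm p (x - 1) * 1 :=
          mul_le_mul_of_nonneg_left (hy.trans h1) (padicNorm.nonneg _)
      _ ≤ _ := by rw [mul_one]; exact hx
  rw [e]
  exact padicNorm.nonarchimedean.trans
    (max_le (padicNorm.nonarchimedean.trans (max_le h2 hx)) hy)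

lemma small_frac {p : ℕ} [hp : Fact p.Prime] (m c d i : ℕ) (hi : 0 < i) (him : i < p ^ m) :
    padicNorm p ((p : ℚ) ^ m * c / ((p : ℚ) ^ m * d + i)) ≤ 1 / p := by
  have hN : p ^ m * d + i ≠ 0 := by omega
  obtain ⟨a, u, hu, h⟩ := Nat.exists_eq_pow_mul_and_not_dvd hN p hp.out.ne_one
  have ham : a < m := by
    by_contra hcon
    have h1 : p ^ m ∣ p ^ m * d + i :=
      h ▸ Dvd.dvd.mul_right (pow_dvd_pow p (not_lt.mp hcon)) u
    have h2 : p ^ m ∣ i := (Nat.dvd_add_right (dvd_mul_right _ _)).mp h1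
    exact absurd (Nat.le_of_dvd hi h2) (by omega)
  obtain ⟨t, rfl⟩ : ∃ t, m = a + t + 1 := ⟨m - a - 1, by omega⟩
  have hp0 : (p : ℚ) ≠ 0 := by exact_mod_cast hp.out.ne_zero
  have hu0 : (u : ℚ) ≠ 0 := by
    have : u ≠ 0 := by rintro rfl; exact hu (dvd_zero _)
    exact_mod_cast this
  have e : (p : ℚ) ^ (a + t + 1) * c / ((p : ℚ) ^ (a + t + 1) * d + i)
      = p * ((p ^ t * c : ℕ) : ℚ) / u := by
    have : (p : ℚ) ^ (a + t + 1) * d + i = p ^ a * u := by exact_mod_cast h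
    rw [this]; push_cast; field_simp; ring
  rw [e, padicNorm.div, padicNorm.mul, (padicNorm.nat_eq_one_iff u).mpr hu,
    padicNorm.padicNorm_p_of_prime, div_one, one_div]
  have : (0 : ℚ) ≤ (p : ℚ)⁻¹ := by positivity
  calc _ ≤ (p : ℚ)⁻¹ * 1 := mul_le_mul_of_nonneg_left (padicNorm.of_nat _) this
    _ = _ := mul_one _

lemma claim1 {p : ℕ} [hp : Fact p.Prime] (m r j : ℕ) (hj : j < p ^ m) :
    padicNorm p (((p ^ m * r + j).choose j : ℚ) - 1) ≤ 1 / p := by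
  induction j with
  | zero => simp
  | succ j ih =>
    have h := Nat.add_one_mul_choose_eq (p ^ m * r + j) j
    have e : ((p ^ m * r + (j + 1)).choose (j + 1) : ℚ)
        = ((p ^ m * r + j).choose j : ℚ) * (((p : ℚ) ^ m * r + (j + 1)) / (j + 1)) := by
      have h' : ((p : ℚ) ^ m * r + j + 1) * ((p ^ m * r + j).choose j : ℚ)
        = ((p ^ m * r + j + 1).choose (j + 1) : ℚ) * (j + 1) := by exact_mod_cast h
      have : (j : ℚ) + 1 ≠ 0 := by positivity
      rw [← add_assoc]
      field_simp
      linarith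
    rw [e]
    refine close_mul (ih (by omega)) ?_
    have := small_frac m r 0 (j + 1) (by omega) hj
    convert this using 2
    have : (j : ℚ) + 1 ≠ 0 := by positivity
    push_cast
    field_simp
    ring

lemma claim2 {p : ℕ} [hp : Fact p.Prime] (m r k : ℕ) (hk : k < p ^ m) :
    padicNorm p (((p ^ m * r + k + p ^ m).choose (p ^ m) : ℚ) / (r + 1) - 1) ≤ 1 / p := by
  have hr : (r : ℚ) + 1 ≠ 0 := by positivity
  have hp0 : (p : ℚ) ≠ 0 := by exact_mod_cast hp.out.ne_zero
  induction k with
  | zero =>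
    have h1 := claim1 (p := p) m r (p ^ m - 1) (by omega)
    have h := Nat.add_one_mul_choose_eq (p ^ m * r + (p ^ m - 1)) (p ^ m - 1)
    have e1 : p ^ m - 1 + 1 = p ^ m := by omega
    rw [add_assoc, e1] at h
    convert h1 using 3
    have h' : ((p : ℚ) ^ m * r + p ^ m) * ((p ^ m * r + (p ^ m - 1)).choose (p ^ m - 1) : ℚ)
      = ((p ^ m * r + p ^ m).choose (p ^ m) : ℚ) * p ^ m := by exact_mod_cast h
    have hP : (p : ℚ) ^ m ≠ 0 := pow_ne_zero _ hp0
    rw [add_zero, div_eq_iff hr]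
    apply mul_right_cancel₀ hP
    rw [← h']; ring
  | succ k ih =>
    have h := Nat.choose_mul_succ_eq (p ^ m * r + k + p ^ m) (p ^ m)
    have e1 : p ^ m * r + k + p ^ m + 1 - p ^ m = p ^ m * r + k + 1 := by omega
    have e2 : p ^ m * r + (k + 1) + p ^ m = p ^ m * r + k + p ^ m + 1 := by ring
    rw [e1] at h
    have h' : ((p ^ m * r + k + p ^ m).choose (p ^ m) : ℚ) * ((p : ℚ) ^ m * r + k + p ^ m + 1)
      = ((p ^ m * r + k + p ^ m + 1).choose (p ^ m) : ℚ) * ((p : ℚ) ^ m * r + k + 1) := by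
      exact_mod_cast h
    have hd : (p : ℚ) ^ m * r + k + 1 ≠ 0 := by positivity
    have e : ((p ^ m * r + (k + 1) + p ^ m).choose (p ^ m) : ℚ) / (r + 1)
        = ((p ^ m * r + k + p ^ m).choose (p ^ m) : ℚ) / (r + 1) *
          (((p : ℚ) ^ m * r + k + p ^ m + 1) / ((p : ℚ) ^ m * r + k + 1)) := by
      rw [e2, div_mul_div_comm, h', mul_div_mul_right _ _ hd]
    rw [e]
    refine close_mul (ih (by omega)) ?_
    have := small_frac (p := p) m 1 r (k + 1) (by omega) hk
    convert this using 2
    push_cast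
    rw [← add_assoc, div_sub_one hd]
    congr 1
    ring

lemma mAngle_zero (p m k : ℕ) : mAngle p m k 0 = 1 := by
  have : ((k / p ^ m).factorial : ℚ) ≠ 0 := by exact_mod_cast Nat.factorial_ne_zero _
  simp [mAngle, this]

theorem gamma_eq_one_mod_p (p m q k : ℕ) (hp : p.Prime) (hq : 1 ≤ q) (hk : k < p ^ m) :
    padicNorm p (mGamma p m 0 (p ^ m * (q - 1) + k) (p ^ m) - 1) ≤ 1 / p := by
  haveI : Fact p.Prime := ⟨hp⟩
  obtain ⟨r, rfl⟩ : ∃ r, q = r + 1 := ⟨q - 1, by omega⟩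
  rw [Nat.add_sub_cancel]
  have hP : 0 < p ^ m := by omega
  have hA : mAngle p m (p ^ m * r + k + p ^ m) (p ^ m * r + k) = r + 1 := by
    have d1 : (p ^ m * r + k) / p ^ m = r := by
      rw [Nat.mul_add_div hP, Nat.div_eq_of_lt hk, add_zero]
    have d2 : (p ^ m * r + k + p ^ m) / p ^ m = r + 1 := by
      rw [Nat.add_div_right _ hP, d1]
    have d3 : (p ^ m * r + k + p ^ m - (p ^ m * r + k)) / p ^ m = 1 := by
      rw [Nat.add_sub_cancel_left, Nat.div_self hP]
    have : (r.factorial : ℚ) ≠ 0 := by exact_mod_cast Nat.factorial_ne_zero _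
    unfold mAngle
    rw [d1, d2, d3, Nat.factorial_succ]
    push_cast
    simp [this]
  have hG : mGamma p m 0 (p ^ m * r + k) (p ^ m)
      = ((p ^ m * r + k + p ^ m).choose (p ^ m) : ℚ) / (r + 1) := by
    unfold mGamma mPartialBinom
    rw [mAngle_zero, mAngle_zero, mAngle_zero, hA, Nat.choose_symm_add]
    simp
  rw [hG]
  exact claim2 m r k hk
end

section
/- Let p be a prime, m, q, k natural numbers with 0 ≤ k < p^m, and let a, b, c be natural numbers with a + b + c = p^m·q + k, a + c ≤ p^m, and b ≥ p^m·q. Then Γ(a,b,c) is congruent to Γ(a, b − p^m·q, c) modulo p, i.e. the p-adic norm of the rational number Γ(a,b,c) − Γ(a, b − p^m·q, c) is at most 1/p. -/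
theorem choose_add_pow_mul_modEq (p : ℕ) (hp : p.Prime) (q : ℕ) : ∀ (m n j : ℕ), j < p ^ m →
    Nat.choose (p ^ m * q + n) j ≡ Nat.choose n j [MOD p] := by
  haveI : Fact p.Prime := ⟨hp⟩
  intro m
  induction m with
  | zero =>
    intro n j hj
    have : j = 0 := by simpa using hj
    subst this
    simp [Nat.ModEq]
  | succ m ih =>
    intro n j hj
    have e : p ^ (m + 1) * q + n = n + p * (p ^ m * q) := by ring
    have h1 := Choose.choose_modEq_choose_mod_mul_choose_div_nat (p := p)
      (n := n + p * (p ^ m * q)) (k := j)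
    have h2 := Choose.choose_modEq_choose_mod_mul_choose_div_nat (p := p) (n := n) (k := j)
    rw [Nat.add_mul_mod_self_left, Nat.add_mul_div_left _ _ hp.pos, Nat.add_comm (n / p)] at h1
    rw [e]
    refine h1.trans (Nat.ModEq.trans ?_ h2.symm)
    refine Nat.ModEq.mul_left _ (ih _ _ ?_)
    rw [Nat.div_lt_iff_lt_mul hp.pos]
    simpa [pow_succ] using hj

theorem mAngle_eq_one_left (p m k k' : ℕ) (h : k' / p ^ m = 0)
    (h2 : (k - k') / p ^ m = k / p ^ m) : mAngle p m k k' = 1 := by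
  unfold mAngle
  rw [h, h2]
  have := Nat.factorial_ne_zero (k / p ^ m)
  field_simp
  simp

theorem mAngle_eq_one_right (p m k k' : ℕ) (h : (k - k') / p ^ m = 0)
    (h2 : k' / p ^ m = k / p ^ m) : mAngle p m k k' = 1 := by
  unfold mAngle
  rw [h, h2]
  have := Nat.factorial_ne_zero (k / p ^ m)
  field_simp
  simp

theorem mGamma_eq (p m q a b c : ℕ) (h : a + b + c < p ^ m) :
    mGamma p m a (p ^ m * q + b) c =
      ((Nat.choose (p ^ m * q + (a + b + c)) a * Nat.choose (p ^ m * q + (b + c)) c : ℕ) : ℚ) := by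
  have hpos : 0 < p ^ m := by omega
  have hd : ∀ x, x < p ^ m → (p ^ m * q + x) / p ^ m = q := by
    intro x hx
    rw [Nat.mul_add_div hpos, Nat.div_eq_of_lt hx, Nat.add_zero]
  have e1 : a + (p ^ m * q + b) + c = p ^ m * q + (a + b + c) := by ring
  have e2 : p ^ m * q + b + c = p ^ m * q + (b + c) := by ring
  have e3 : a + (p ^ m * q + b) = p ^ m * q + (a + b) := by ring
  have a1 : mAngle p m (p ^ m * q + (a + b + c)) a = 1 := by
    apply mAngle_eq_one_left
    · exact Nat.div_eq_of_lt (by omega)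
    · rw [show p ^ m * q + (a + b + c) - a = p ^ m * q + (b + c) by omega,
        hd _ (by omega), hd _ (by omega)]
  have a2 : mAngle p m (p ^ m * q + (b + c)) (p ^ m * q + b) = 1 := by
    apply mAngle_eq_one_right
    · exact Nat.div_eq_of_lt (by omega)
    · rw [hd _ (by omega), hd _ (by omega)]
  have a3 : mAngle p m (p ^ m * q + (a + b)) a = 1 := by
    apply mAngle_eq_one_left
    · exact Nat.div_eq_of_lt (by omega)
    · rw [show p ^ m * q + (a + b) - a = p ^ m * q + b by omega,
        hd _ (by omega), hd _ (by omega)]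
  have a4 : mAngle p m (a + c) a = 1 := by
    apply mAngle_eq_one_left
    · exact Nat.div_eq_of_lt (by omega)
    · rw [Nat.div_eq_of_lt (by omega), Nat.div_eq_of_lt (by omega)]
  have hs : Nat.choose (p ^ m * q + (b + c)) (p ^ m * q + b)
      = Nat.choose (p ^ m * q + (b + c)) c :=
    Nat.choose_symm_of_eq_add (by ring)
  unfold mGamma mPartialBinom
  rw [e1, e2, e3, a1, a2, a3, a4, hs]
  push_cast
  ring

theorem gamma_sub_gamma_mod_p (p m q k a b c : ℕ) (hp : p.Prime) (hk : k < p ^ m)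
    (habc : a + b + c = p ^ m * q + k) (hac : a + c ≤ p ^ m) (hb : p ^ m * q ≤ b) :
    padicNorm p (mGamma p m a b c - mGamma p m a (b - p ^ m * q) c) ≤ 1 / p := by
  haveI : Fact p.Prime := ⟨hp⟩
  obtain ⟨b, rfl⟩ := Nat.exists_eq_add_of_le hb
  have hlt : a + b + c < p ^ m := by omega
  have g0 := mGamma_eq p m 0 a b c hlt
  simp only [Nat.mul_zero, Nat.zero_add] at g0
  rw [Nat.add_sub_cancel_left, g0, mGamma_eq p m q a b c hlt]
  have hmod := Nat.ModEq.mul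
    (choose_add_pow_mul_modEq p hp q m (a + b + c) a (by omega))
    (choose_add_pow_mul_modEq p hp q m (b + c) c (by omega))
  have hdvd := (Nat.modEq_iff_dvd.1 hmod.symm)
  have := (padicNorm.dvd_iff_norm_le (p := p) (n := 1)).1 (by simpa using hdvd)
  simpa using this
end

section
/- Let p be a prime, m a natural number, and let q ≥ 1, k, t be natural numbers with 0 ≤ k < t ≤ p^m. Then the p-adic valuation of the binomial coefficient C(p^m·q + k, t) equals the p-adic valuation of q plus the p-adic valuation of the binomial coefficient C(p^m + k, t); that is, padicValNat p (C(p^m·q + k, t)) = padicValNat p q + padicValNat p (C(p^m + k, t)). -/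
theorem aux_val (p m r b : ℕ) [Fact p.Prime] (hb : ¬ p ^ m ∣ b) :
    padicValNat p (p ^ m * r + b) = padicValNat p b := by
  have hb0 : b ≠ 0 := by rintro rfl; simp at hb
  have ha0 : p ^ m * r + b ≠ 0 := by omega
  have key : ∀ n, p ^ n ∣ p ^ m * r + b ↔ p ^ n ∣ b := by
    intro n
    rcases le_total n m with h | h
    · exact Nat.dvd_add_right ((pow_dvd_pow p h).mul_right r)
    · have h1 : p ^ m ∣ p ^ n := pow_dvd_pow p h
      constructor
      · intro h2
        exact absurd ((Nat.dvd_add_right (dvd_mul_right _ r)).1 (h1.trans h2)) hb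
      · intro h2
        exact absurd (h1.trans h2) hb
  apply le_antisymm
  · exact (padicValNat_dvd_iff_le hb0).1 ((key _).1 pow_padicValNat_dvd)
  · exact (padicValNat_dvd_iff_le ha0).1 ((key _).2 pow_padicValNat_dvd)

theorem aux_desc (p m r k : ℕ) [hp : Fact p.Prime] (hk : k < p ^ m) (s : ℕ) (hs : s ≤ p ^ m) :
    padicValNat p ((p ^ m * (r + 1) + k).descFactorial s) =
      (if k < s then padicValNat p (r + 1) else 0) +
        padicValNat p ((p ^ m + k).descFactorial s) := by
  induction s with
  | zero => simp
  | succ s ih =>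
    have ih := ih (by omega)
    have e : p ^ m * (r + 1) + k - s = p ^ m * r + (p ^ m + k - s) := by
      rw [mul_add, mul_one]; omega
    have hge : p ^ m ≤ p ^ m * (r + 1) := Nat.le_mul_of_pos_right _ (by omega)
    have n1 : (p ^ m * (r + 1) + k).descFactorial s ≠ 0 := by
      rw [Ne, Nat.descFactorial_eq_zero_iff_lt]; omega
    have n2 : (p ^ m + k).descFactorial s ≠ 0 := by
      rw [Ne, Nat.descFactorial_eq_zero_iff_lt]; omega
    rw [Nat.descFactorial_succ, Nat.descFactorial_succ,
      padicValNat.mul (by omega) n1, padicValNat.mul (by omega) n2, ih]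
    by_cases hks : k = s
    · subst hks
      rw [Nat.add_sub_cancel, Nat.add_sub_cancel, padicValNat.mul (by omega) (by omega)]
      simp
      omega
    · rw [e, aux_val]
      · have : (k < s + 1) ↔ k < s := by omega
        simp only [this]
        omega
      · rintro ⟨c, hc⟩
        rcases c with _ | _ | c
        · omega
        · omega
        · have : p ^ m * (c + 1 + 1) = p ^ m * c + p ^ m + p ^ m := by ring
          omega

theorem padicValNat_choose_eq (p m q k t : ℕ) (hp : p.Prime) (hq : 1 ≤ q)
    (hkt : k < t) (ht : t ≤ p ^ m) :
    padicValNat p (Nat.choose (p ^ m * q + k) t) =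
      padicValNat p q + padicValNat p (Nat.choose (p ^ m + k) t) := by
  haveI : Fact p.Prime := ⟨hp⟩
  obtain ⟨r, rfl⟩ : ∃ r, q = r + 1 := ⟨q - 1, by omega⟩
  have h := aux_desc p m r k (by omega) t ht
  have hge : p ^ m ≤ p ^ m * (r + 1) := Nat.le_mul_of_pos_right _ (by omega)
  rw [Nat.descFactorial_eq_factorial_mul_choose, Nat.descFactorial_eq_factorial_mul_choose,
    padicValNat.mul (Nat.factorial_ne_zero _) (Nat.choose_ne_zero (by omega)),
    padicValNat.mul (Nat.factorial_ne_zero _) (Nat.choose_ne_zero (by omega)), if_pos hkt] at h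
  omega
end

section
/- Let p be a prime, m a natural number, and let q ≥ 1, k, t be natural numbers with 0 ≤ k < t ≤ p^m. Then (p − 1) · (padicValNat p (C(p^m·q + k, t)) − padicValNat p q) = S_p(t) + S_p(p^m + k − t) − S_p(k) − 1, where S_p(n) denotes the sum of the digits of n in base p. -/
theorem sum_digits_split (p : ℕ) (hp : 1 < p) (a : ℕ) : ∀ (m r : ℕ), r < p ^ m →
    (Nat.digits p (p ^ m * a + r)).sum = (Nat.digits p a).sum + (Nat.digits p r).sum := by
  have step : ∀ n, (Nat.digits p n).sum = n % p + (Nat.digits p (n / p)).sum := by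
    intro n
    rcases Nat.eq_zero_or_pos n with h | h
    · subst h; simp
    · rw [Nat.digits_def' hp h]; simp
  intro m
  induction m with
  | zero => intro r hr; obtain rfl : r = 0 := by simpa using hr
            simp
  | succ m ih =>
    intro r hr
    have hp0 : 0 < p := by omega
    have e : p ^ (m + 1) * a + r = r + p * (p ^ m * a) := by ring
    have h2 : r / p < p ^ m := by
      apply Nat.div_lt_of_lt_mul
      rw [pow_succ] at hr; linarith
    rw [step (p ^ (m + 1) * a + r), step r, e, Nat.add_mul_mod_self_left,
      Nat.add_mul_div_left _ _ hp0, add_comm (r / p), ih _ h2]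
    omega

theorem padicValNat_choose_digit_sum (p m q k t : ℕ) (hp : p.Prime) (hq : 1 ≤ q)
    (hkt : k < t) (ht : t ≤ p ^ m) :
    ((p : ℤ) - 1) *
        ((padicValNat p (Nat.choose (p ^ m * q + k) t) : ℤ) - (padicValNat p q : ℤ)) =
      ((Nat.digits p t).sum : ℤ) + ((Nat.digits p (p ^ m + k - t)).sum : ℤ) -
        ((Nat.digits p k).sum : ℤ) - 1 := by
  have : Fact p.Prime := ⟨hp⟩
  have hp1 := hp.one_lt
  obtain ⟨a, rfl⟩ : ∃ a, q = a + 1 := ⟨q - 1, by omega⟩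
  obtain ⟨s, hs⟩ : ∃ s, p ^ m + k = s + t := ⟨p ^ m + k - t, by omega⟩
  have en : p ^ m * (a + 1) + k = (p ^ m * a + s) + t := by rw [mul_add]; omega
  have e1 : p ^ m + k - t = s := by omega
  have cast : ((p - 1 : ℕ) : ℤ) = (p : ℤ) - 1 := by push_cast [hp1.le]; ring
  have leg : ∀ n : ℕ, ((p : ℤ) - 1) * (padicValNat p n.factorial : ℤ)
      = (n : ℤ) - ((Nat.digits p n).sum : ℕ) := by
    intro n
    rw [← cast, ← Nat.cast_mul, sub_one_mul_padicValNat_factorial,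
      Nat.cast_sub (Nat.digit_sum_le p n)]
  have kum : ∀ x y : ℕ, ((p : ℤ) - 1) * (padicValNat p (Nat.choose (x + y) y) : ℤ)
      = (Nat.digits p y).sum + (Nat.digits p x).sum - (Nat.digits p (x + y)).sum := by
    intro x y
    have h := congrArg (padicValNat p) (Nat.add_choose_mul_factorial_mul_factorial x y)
    rw [padicValNat.mul (mul_ne_zero (Nat.choose_pos (by omega)).ne' (Nat.factorial_ne_zero _))
      (Nat.factorial_ne_zero _), padicValNat.mul (Nat.choose_pos (by omega)).ne'
      (Nat.factorial_ne_zero _)] at h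
    have h' : (padicValNat p (Nat.choose (x + y) y) : ℤ) = padicValNat p (x + y).factorial
      - padicValNat p y.factorial - padicValNat p x.factorial := by omega
    rw [h', mul_sub, mul_sub, leg, leg, leg]
    push_cast
    ring
  have A := kum (p ^ m * a + s) t
  have B := kum a 1
  rw [Nat.choose_one_right, Nat.digits_of_lt p 1 one_ne_zero hp1] at B
  rw [← en, sum_digits_split p hp1 a m s (by omega),
    sum_digits_split p hp1 (a + 1) m k (by omega)] at A
  rw [e1, mul_sub, A, B]
  push_cast
  simp
  ring
end
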